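/- Let A be an additive category, B an additive category with countable coproducts, and F : A ⥤ C(B) an additive functor. Then the extended functor F^C : C(A) ⥤ C(B) descends to the homotopy categories: there exists a functor F^K : K(A) ⥤ K(B) such that F^K ∘ Q_A = Q_B ∘ F^C, where Q_A : C(A) → K(A) and Q_B : C(B) → K(B) are the quotient functors onto the homotopy categories; moreover F^K is a triangulated (triangle-exact) functor with respect to the standard triangulated structures on K(A) and K(B). -/

import Mathlib

/-!
Totalization is a dg functor: a degree `n` cochain between bicomplexes, regarded as complexes of
columns, induces a degree `n` cochain between their totals, compatibly with composition and with
the differential `δ`. For `δ`, the vertical differentials contribute nothing because the components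
of a cochain are chain maps of columns.

A homotopy is a cochain of degree `-1`, so totalization descends to the homotopy category. A
distinguished triangle in a homotopy category comes from a degreewise split short complex; if `s`
and `r` are the degreewise sections and retractions, then its connecting morphism is the cocycle
`δ s ≫ r`, whence totalization is triangulated. The functor `F^K` is the composite of the functor
on homotopy categories induced by `F` itself and that induced by totalization.
-/

open CategoryTheory CategoryTheory.Limits

section ExtensionOfFunctors

variable {A : Type*} [Category A] [Preadditive A] [HasZeroObject A] [HasBinaryBiproducts A]
variable {B : Type*} [Category B] [Preadditive B] [HasZeroObject B]
  [HasCountableCoproducts B]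

instance hasTotalUpInt (K : HomologicalComplex₂ B (ComplexShape.up ℤ) (ComplexShape.up ℤ)) :
    K.HasTotal (ComplexShape.up ℤ) :=
  fun _ => inferInstance

instance : HasBinaryBiproducts B := HasBinaryBiproducts.of_hasBinaryCoproducts

/-- Given an additive functor `F : A ⥤ C(B)`, the associated double complex functor
`F^{DC} : C(A) ⥤ DC(B)`: the `i`-th column of `F^{DC}(M)` is the complex `F(M^i)` and its
horizontal differentials are the chain maps `F(d_M^i)`. -/
noncomputable def extDC (F : A ⥤ CochainComplex B ℤ) [F.Additive] :
    CochainComplex A ℤ ⥤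
      HomologicalComplex₂ B (ComplexShape.up ℤ) (ComplexShape.up ℤ) :=
  F.mapHomologicalComplex (ComplexShape.up ℤ)

/-- The extended functor `F^C : C(A) ⥤ C(B)` of an additive functor `F : A ⥤ C(B)`,
obtained by totalizing the double complex `F^{DC}(M)` with the standard sign convention,
so that `F^C(M)^n = ⊕_{i} F(M^i)^{n−i}`. -/
noncomputable def extC (F : A ⥤ CochainComplex B ℤ) [F.Additive] :
    CochainComplex A ℤ ⥤ CochainComplex B ℤ :=
  extDC F ⋙
    HomologicalComplex₂.totalFunctor B (ComplexShape.up ℤ) (ComplexShape.up ℤ)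
      (ComplexShape.up ℤ)

section Totalization

open ComplexShape CochainComplex CochainComplex.HomComplex HomologicalComplex₂ Pretriangulated

variable {C : Type*} [Category C] [Preadditive C]

section Cochains

variable {K L M : HomologicalComplex₂ C (up ℤ) (up ℤ)}
  [K.HasTotal (up ℤ)] [L.HasTotal (up ℤ)] [M.HasTotal (up ℤ)]

lemma ι_total_d (p q n p' q' n' : ℤ) (h : p + q = n)
    (hp : p + 1 = p') (hq : q + 1 = q') (hn : n + 1 = n') :
    K.ιTotal (up ℤ) p q n h ≫ (K.total (up ℤ)).d n n' =
      (K.d p p').f q ≫ K.ιTotal (up ℤ) p' q n' (by dsimp; lia) +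
        p.negOnePow • ((K.X p).d q q' ≫ K.ιTotal (up ℤ) p q' n' (by dsimp; lia)) := by
  have horizontal : K.ιTotal (up ℤ) p q n h ≫ K.D₁ (up ℤ) n n' =
      (K.d p p').f q ≫ K.ιTotal (up ℤ) p' q n' (by dsimp; lia) := by
    rw [K.ι_D₁, K.d₁_eq (up ℤ) hp q n' (by dsimp; lia)]
    exact one_smul _ _
  have vertical : K.ιTotal (up ℤ) p q n h ≫ K.D₂ (up ℤ) n n' =
      p.negOnePow • ((K.X p).d q q' ≫ K.ιTotal (up ℤ) p q' n' (by dsimp; lia)) := by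
    rw [K.ι_D₂, K.d₂_eq (up ℤ) p hq n' (by dsimp; lia)]
    rfl
  rw [total_d, Preadditive.comp_add, horizontal, vertical]

/-- The cochain of total complexes induced by a cochain `z` of the bicomplexes `K` and `L`,
regarded as complexes of columns: it maps the summand `(p, q)` to the summand `(p + n, q)` by
`z`, without signs. -/
noncomputable def totalCochain {n : ℤ} (z : Cochain K L n) :
    Cochain (K.total (up ℤ)) (L.total (up ℤ)) n :=
  Cochain.mk fun i j hij => K.totalDesc fun p q h =>
    (z.v p (p + n) rfl).f q ≫ L.ιTotal (up ℤ) (p + n) q j (by dsimp at h ⊢; lia)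

lemma ι_totalCochain_v {n : ℤ} (z : Cochain K L n) (p q i p' j : ℤ) (h : p + q = i)
    (hp : p + n = p') (hij : i + n = j) :
    K.ιTotal (up ℤ) p q i h ≫ (totalCochain z).v i j hij =
      (z.v p p' hp).f q ≫ L.ιTotal (up ℤ) p' q j (by dsimp; lia) := by
  subst hp
  simp only [totalCochain, Cochain.mk_v, ι_totalDesc]

lemma ι_totalCochain_v_assoc {n : ℤ} (z : Cochain K L n) (p q i p' j : ℤ) (h : p + q = i)
    (hp : p + n = p') (hij : i + n = j) {Z : C} (k : (L.total (up ℤ)).X j ⟶ Z) :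
    K.ιTotal (up ℤ) p q i h ≫ (totalCochain z).v i j hij ≫ k =
      (z.v p p' hp).f q ≫ L.ιTotal (up ℤ) p' q j (by dsimp; lia) ≫ k := by
  rw [← Category.assoc, ι_totalCochain_v z p q i p' j h hp hij, Category.assoc]

lemma totalCochain_add {n : ℤ} (z w : Cochain K L n) :
    totalCochain (z + w) = totalCochain z + totalCochain w := by
  ext i j hij p q h
  rw [Cochain.add_v, Preadditive.comp_add, ι_totalCochain_v _ p q i _ j h rfl,
    ι_totalCochain_v _ p q i _ j h rfl, ι_totalCochain_v _ p q i _ j h rfl, Cochain.add_v,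
    HomologicalComplex.add_f_apply, Preadditive.add_comp]

lemma totalCochain_ofHom (f : K ⟶ L) :
    totalCochain (Cochain.ofHom f) = Cochain.ofHom (total.map f (up ℤ)) := by
  ext i p q h
  rw [ι_totalCochain_v _ p q i _ i h (add_zero p), Cochain.ofHom_v, Cochain.ofHom_v, ιTotal_map]

lemma totalCochain_ofHom_id :
    totalCochain (Cochain.ofHom (𝟙 K)) = Cochain.ofHom (𝟙 (K.total (up ℤ))) := by
  rw [totalCochain_ofHom, total.map_id]

lemma totalCochain_comp {m n k : ℤ} (z : Cochain K L m) (w : Cochain L M n) (hk : m + n = k) :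
    totalCochain (z.comp w hk) = (totalCochain z).comp (totalCochain w) hk := by
  ext i j hij p q h
  dsimp at h
  rw [Cochain.comp_v _ _ hk i (i + m) j rfl (by lia),
    ι_totalCochain_v _ p q i (p + k) j h rfl,
    ι_totalCochain_v_assoc _ p q i (p + m) (i + m) h rfl,
    ι_totalCochain_v _ (p + m) q (i + m) (p + k) j (by lia) (by lia),
    Cochain.comp_v _ _ hk p (p + m) (p + k) rfl (by lia), HomologicalComplex.comp_f,
    Category.assoc]

lemma δ_totalCochain {n m : ℤ} (z : Cochain K L n) :
    δ n m (totalCochain z) = totalCochain (δ n m z) := by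
  by_cases hnm : n + 1 = m
  · ext i j hij p q h
    dsimp at h
    rw [ι_totalCochain_v _ p q i (p + m) j h rfl,
      δ_v n m hnm _ i j hij (i + n) (i + 1) (by lia) rfl,
      δ_v n m hnm _ p (p + m) rfl (p + n) (p + 1) (by lia) rfl,
      Preadditive.comp_add, Linear.comp_units_smul,
      ι_totalCochain_v_assoc z p q i (p + n) (i + n) h rfl,
      ι_total_d (p + n) q (i + n) (p + m) (q + 1) j (by lia) (by lia) rfl (by lia),
      ← Category.assoc (K.ιTotal _ _ _ _ _),
      ι_total_d p q i (p + 1) (q + 1) (i + 1) h rfl rfl rfl, Preadditive.add_comp,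
      Linear.units_smul_comp, Category.assoc, Category.assoc,
      ι_totalCochain_v z (p + 1) q (i + 1) (p + m) j (by lia) (by lia),
      ι_totalCochain_v z p (q + 1) (i + 1) (p + n) j (by lia) rfl]
    simp only [← hnm, Int.negOnePow_succ, Int.negOnePow_add p n, mul_comm p.negOnePow, neg_mul,
      Units.neg_smul, smul_add, smul_smul, Preadditive.comp_add, Preadditive.add_comp,
      Preadditive.neg_comp, Linear.units_smul_comp, Linear.comp_units_smul,
      HomologicalComplex.add_f_apply, HomologicalComplex.neg_f_apply,
      HomologicalComplex.units_smul_f_apply, HomologicalComplex.comp_f,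
      HomologicalComplex.Hom.comm_assoc, Category.assoc]
    abel
  · rw [δ_shape _ _ hnm, δ_shape _ _ hnm]
    ext i j hij p q h
    simp [ι_totalCochain_v _ p q i _ j h rfl]

/-- Totalization preserves homotopies of maps of complexes of columns. -/
noncomputable def totalMapHomotopy {f g : K ⟶ L} (H : Homotopy f g) :
    Homotopy (total.map f (up ℤ)) (total.map g (up ℤ)) :=
  (Cochain.equivHomotopy _ _).symm ⟨totalCochain (Cochain.equivHomotopy f g H).1, by
    rw [δ_totalCochain, ← totalCochain_ofHom, ← totalCochain_ofHom, ← totalCochain_add,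
      ← (Cochain.equivHomotopy f g H).2]⟩

end Cochains

section DegreewiseSplit

variable {S : ShortComplex (CochainComplex C ℤ)}
  (σ : ∀ n, (S.map (HomologicalComplex.eval C (up ℤ) n)).Splitting)

/-- The sections of a degreewise splitting, as a cochain of degree `0`. -/
def sectionCochain : Cochain S.X₃ S.X₂ 0 := Cochain.ofHoms fun n => (σ n).s

/-- The retractions of a degreewise splitting, as a cochain of degree `0`. -/
def retractionCochain : Cochain S.X₂ S.X₁ 0 := Cochain.ofHoms fun n => (σ n).r

lemma sectionCochain_v (n : ℤ) : (sectionCochain σ).v n n (add_zero n) = (σ n).s :=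
  Cochain.ofHoms_v _ n

lemma retractionCochain_v (n : ℤ) : (retractionCochain σ).v n n (add_zero n) = (σ n).r :=
  Cochain.ofHoms_v _ n

lemma ofHom_f_comp_retractionCochain :
    (Cochain.ofHom S.f).comp (retractionCochain σ) (add_zero 0) = Cochain.ofHom (𝟙 S.X₁) := by
  ext n
  simp only [Cochain.comp_zero_cochain_v, Cochain.ofHom_v, retractionCochain_v]
  exact (σ n).f_r

lemma sectionCochain_comp_ofHom_g :
    (sectionCochain σ).comp (Cochain.ofHom S.g) (add_zero 0) = Cochain.ofHom (𝟙 S.X₃) := by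
  ext n
  simp only [Cochain.comp_zero_cochain_v, Cochain.ofHom_v, sectionCochain_v]
  exact (σ n).s_g

lemma sectionCochain_comp_retractionCochain :
    (sectionCochain σ).comp (retractionCochain σ) (add_zero 0) = 0 := by
  ext n
  simp only [Cochain.comp_zero_cochain_v, sectionCochain_v, retractionCochain_v]
  exact (σ n).s_r

lemma retractionCochain_comp_add_comp_sectionCochain :
    (retractionCochain σ).comp (Cochain.ofHom S.f) (add_zero 0) +
      (Cochain.ofHom S.g).comp (sectionCochain σ) (add_zero 0) = Cochain.ofHom (𝟙 S.X₂) := by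
  ext n
  simp only [Cochain.add_v, Cochain.comp_zero_cochain_v, Cochain.ofHom_v, sectionCochain_v,
    retractionCochain_v]
  exact (σ n).id

lemma cocycleOfDegreewiseSplit_eq_δ_comp :
    (cocycleOfDegreewiseSplit S σ : Cochain S.X₃ S.X₁ 1) =
      (δ 0 1 (sectionCochain σ)).comp (retractionCochain σ) (add_zero 1) := by
  ext n m hnm
  have s_r : (sectionCochain σ).v m m (add_zero m) ≫
      (retractionCochain σ).v m m (add_zero m) = 0 := by
    simpa using Cochain.congr_v (sectionCochain_comp_retractionCochain σ) m m (add_zero m)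
  rw [Cochain.comp_zero_cochain_v, δ_zero_cochain_v, Preadditive.sub_comp, Category.assoc,
    Category.assoc, s_r, comp_zero, sub_zero, sectionCochain_v, retractionCochain_v]
  rfl

lemma homOfDegreewiseSplit_f_comp (n : ℤ) :
    (homOfDegreewiseSplit S σ).f n ≫ (shiftFunctorObjXIso S.X₁ 1 n (n + 1) rfl).hom =
      (cocycleOfDegreewiseSplit S σ : Cochain S.X₃ S.X₁ 1).v n (n + 1) rfl := by
  rw [homOfDegreewiseSplit_f]
  exact Category.comp_id _

end DegreewiseSplit

section Shift

-- The identification of `(K⟦a⟧).X n` with `K.X (n + a)` is made explicit by composing with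
-- `shiftFunctorObjXIso`, which also lets the target index be any `m` equal to `n + a`.

lemma shiftFunctorAdd_hom_app_f_comp (K : CochainComplex C ℤ) (a b n m k : ℤ)
    (hm : m = n + b) (hk : k = m + a) :
    ((shiftFunctorAdd (CochainComplex C ℤ) a b).hom.app K).f n ≫
        (shiftFunctorObjXIso (K⟦a⟧) b n m hm).hom ≫ (shiftFunctorObjXIso K a m k hk).hom =
      (shiftFunctorObjXIso K (a + b) n k (by lia)).hom := by
  subst hm hk
  rw [shiftFunctorAdd_hom_app_f]
  exact (congrArg (_ ≫ ·) (Category.comp_id _)).trans (Category.comp_id _)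

lemma shift_map_f_comp {K L : CochainComplex C ℤ} (f : K ⟶ L) (x n m : ℤ) (hm : m = n + x) :
    (f⟦x⟧').f n ≫ (shiftFunctorObjXIso L x n m hm).hom =
      (shiftFunctorObjXIso K x n m hm).hom ≫ f.f m := by
  subst hm
  exact (Category.comp_id _).trans (Category.id_comp _).symm

lemma shift_map_f_comp_assoc {K L : CochainComplex C ℤ} (f : K ⟶ L) (x n m : ℤ)
    (hm : m = n + x) {Z : C} (k : L.X m ⟶ Z) :
    (f⟦x⟧').f n ≫ (shiftFunctorObjXIso L x n m hm).hom ≫ k =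
      (shiftFunctorObjXIso K x n m hm).hom ≫ f.f m ≫ k := by
  rw [← Category.assoc, shift_map_f_comp, Category.assoc]

variable (K : HomologicalComplex₂ C (up ℤ) (up ℤ)) [K.HasTotal (up ℤ)]

lemma ι_totalShift₁Iso_hom_f_comp (x p q n p' n' : ℤ) (h : p + q = n)
    (hp : p' = p + x) (hn : n' = n + x) :
    ((shiftFunctor₁ C x).obj K).ιTotal (up ℤ) p q n h ≫ (K.totalShift₁Iso x).hom.f n ≫
        (shiftFunctorObjXIso (K.total (up ℤ)) x n n' hn).hom =
      (shiftFunctorObjXIso K x p p' hp).hom.f q ≫ K.ιTotal (up ℤ) p' q n' (by dsimp; lia) := by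
  rw [ι_totalShift₁Iso_hom_f_assoc K x p q n h p' hp n' hn, Iso.inv_hom_id, Category.comp_id]
  subst hp
  rfl

lemma ι_totalShift₁Iso_hom_f_comp_assoc (x p q n p' n' : ℤ) (h : p + q = n)
    (hp : p' = p + x) (hn : n' = n + x) {Z : C} (k : (K.total (up ℤ)).X n' ⟶ Z) :
    ((shiftFunctor₁ C x).obj K).ιTotal (up ℤ) p q n h ≫ (K.totalShift₁Iso x).hom.f n ≫
        (shiftFunctorObjXIso (K.total (up ℤ)) x n n' hn).hom ≫ k =
      (shiftFunctorObjXIso K x p p' hp).hom.f q ≫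
        K.ιTotal (up ℤ) p' q n' (by dsimp; lia) ≫ k := by
  simpa only [Category.assoc] using
    congrArg (· ≫ k) (ι_totalShift₁Iso_hom_f_comp K x p q n p' n' h hp hn)

lemma ι_totalShift₁Iso_hom_f_comp_shift_map_f_comp (a b p q n p' p'' n' n'' : ℤ) (h : p + q = n)
    (hp : p' = p + b) (hp' : p'' = p' + a) (hn : n' = n + b) (hn' : n'' = n' + a) :
    ((shiftFunctor₁ C b).obj ((shiftFunctor₁ C a).obj K)).ιTotal (up ℤ) p q n h ≫
        (((shiftFunctor₁ C a).obj K).totalShift₁Iso b).hom.f n ≫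
          ((K.totalShift₁Iso a).hom⟦b⟧').f n ≫
            (shiftFunctorObjXIso ((K.total (up ℤ))⟦a⟧) b n n' hn).hom ≫
              (shiftFunctorObjXIso (K.total (up ℤ)) a n' n'' hn').hom =
      (shiftFunctorObjXIso ((shiftFunctor₁ C a).obj K) b p p' hp).hom.f q ≫
        (shiftFunctorObjXIso K a p' p'' hp').hom.f q ≫
          K.ιTotal (up ℤ) p'' q n'' (by dsimp; lia) := by
  rw [shift_map_f_comp_assoc, ι_totalShift₁Iso_hom_f_comp_assoc _ b p q n p' n' h hp hn,
    ι_totalShift₁Iso_hom_f_comp K a p' q n' p'' n'' (by lia) hp' hn']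

end Shift

section TotalFunctor

variable [∀ K : HomologicalComplex₂ C (up ℤ) (up ℤ), K.HasTotal (up ℤ)]

lemma totalShift₁Iso_hom_comp_shiftFunctorZero_hom_app
    (K : HomologicalComplex₂ C (up ℤ) (up ℤ)) :
    (K.totalShift₁Iso 0).hom ≫
        (shiftFunctorZero (CochainComplex C ℤ) ℤ).hom.app (K.total (up ℤ)) =
      (totalFunctor C (up ℤ) (up ℤ) (up ℤ)).map
        ((shiftFunctorZero (CochainComplex (CochainComplex C ℤ) ℤ) ℤ).hom.app K) := by
  ext n p q h
  dsimp at h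
  rw [HomologicalComplex.comp_f, shiftFunctorZero_hom_app_f]
  refine (ι_totalShift₁Iso_hom_f_comp K 0 p q n p n h
    (add_zero p).symm (add_zero n).symm).trans ?_
  refine (congrArg (·.f q ≫ _) (shiftFunctorZero_hom_app_f K p)).symm.trans ?_
  exact (ιTotal_map _ _ _ (up ℤ) p q n h).symm

lemma totalShift₁Iso_hom_comp_shiftFunctorAdd_hom_app
    (K : HomologicalComplex₂ C (up ℤ) (up ℤ)) (a b : ℤ) :
    (K.totalShift₁Iso (a + b)).hom ≫
        (shiftFunctorAdd (CochainComplex C ℤ) a b).hom.app (K.total (up ℤ)) =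
      (totalFunctor C (up ℤ) (up ℤ) (up ℤ)).map
          ((shiftFunctorAdd (CochainComplex (CochainComplex C ℤ) ℤ) a b).hom.app K) ≫
        (((shiftFunctor₁ C a).obj K).totalShift₁Iso b).hom ≫
          (CategoryTheory.shiftFunctor (CochainComplex C ℤ) b).map (K.totalShift₁Iso a).hom := by
  ext n p q h
  dsimp at h
  refine Eq.trans ?_ (ιTotal_map_assoc _ _
    ((shiftFunctorAdd (CochainComplex (CochainComplex C ℤ) ℤ) a b).hom.app K) (up ℤ) p q n h
    ((((shiftFunctor₁ C a).obj K).totalShift₁Iso b).hom.f n ≫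
      ((CategoryTheory.shiftFunctor (CochainComplex C ℤ) b).map
        (K.totalShift₁Iso a).hom).f n)).symm
  refine (cancel_mono (shiftFunctorObjXIso ((K.total (up ℤ))⟦a⟧) b n (n + b) rfl).hom).1 ?_
  refine (cancel_mono (shiftFunctorObjXIso (K.total (up ℤ)) a (n + b) (n + b + a) rfl).hom).1 ?_
  simp only [HomologicalComplex.comp_f, Category.assoc]
  refine (congrArg (fun t => _ ≫ (K.totalShift₁Iso (a + b)).hom.f n ≫ t)
    (shiftFunctorAdd_hom_app_f_comp (K.total (up ℤ)) a b n (n + b) (n + b + a) rfl rfl)).trans ?_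
  rw [ι_totalShift₁Iso_hom_f_comp K (a + b) p q n (p + b + a) (n + b + a) h (by lia) (by lia),
    ← shiftFunctorAdd_hom_app_f_comp K a b p (p + b) (p + b + a) rfl rfl]
  simp only [HomologicalComplex.comp_f, Category.assoc]
  exact congrArg _ (ι_totalShift₁Iso_hom_f_comp_shift_map_f_comp K a b p q n (p + b) (p + b + a)
    (n + b) (n + b + a) h rfl rfl rfl rfl).symm

variable (C)

instance : (totalFunctor C (up ℤ) (up ℤ) (up ℤ)).Additive where
  map_add {K L f g} := Cochain.ofHom_injective <| by
    have := totalCochain_add (Cochain.ofHom f) (Cochain.ofHom g)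
    rwa [← Cochain.ofHom_add, totalCochain_ofHom, totalCochain_ofHom, totalCochain_ofHom,
      ← Cochain.ofHom_add] at this

noncomputable instance : (totalFunctor C (up ℤ) (up ℤ) (up ℤ)).CommShift ℤ where
  commShiftIso x := NatIso.ofComponents (fun K => K.totalShift₁Iso x)
    (fun f => totalShift₁Iso_hom_naturality f x)
  commShiftIso_zero := by
    ext K : 3
    rw [Functor.CommShift.isoZero_hom_app]
    exact (Iso.eq_comp_inv ((shiftFunctorZero (CochainComplex C ℤ) ℤ).app _)).2
      (totalShift₁Iso_hom_comp_shiftFunctorZero_hom_app K)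
  commShiftIso_add a b := by
    ext K : 3
    rw [Functor.CommShift.isoAdd_hom_app,
      ← cancel_mono ((shiftFunctorAdd (CochainComplex C ℤ) a b).hom.app _)]
    simp only [Category.assoc]
    rw [Iso.inv_hom_id_app]
    refine (totalShift₁Iso_hom_comp_shiftFunctorAdd_hom_app K a b).trans ?_
    exact congrArg _ (congrArg _ (Category.comp_id _).symm)

end TotalFunctor

section Triangle

variable [∀ K : HomologicalComplex₂ C (up ℤ) (up ℤ), K.HasTotal (up ℤ)]
  {S : ShortComplex (CochainComplex (CochainComplex C ℤ) ℤ)}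
  (σ : ∀ n, (S.map (HomologicalComplex.eval (CochainComplex C ℤ) (up ℤ) n)).Splitting)

/-- A degreewise splitting of a short complex of complexes of columns induces one of its
totalization. -/
noncomputable def totalSplitting (n : ℤ) :
    ((S.map (totalFunctor C (up ℤ) (up ℤ) (up ℤ))).map
      (HomologicalComplex.eval C (up ℤ) n)).Splitting where
  r := (totalCochain (retractionCochain σ)).v n n (add_zero n)
  s := (totalCochain (sectionCochain σ)).v n n (add_zero n)
  f_r := by
    have f_r := congrArg totalCochain (ofHom_f_comp_retractionCochain σ)
    rw [totalCochain_comp, totalCochain_ofHom, totalCochain_ofHom_id] at f_r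
    have f_r_v := Cochain.congr_v f_r n n (add_zero n)
    rw [Cochain.comp_zero_cochain_v, Cochain.ofHom_v, Cochain.ofHom_v] at f_r_v
    exact f_r_v
  s_g := by
    have s_g := congrArg totalCochain (sectionCochain_comp_ofHom_g σ)
    rw [totalCochain_comp, totalCochain_ofHom, totalCochain_ofHom_id] at s_g
    have s_g_v := Cochain.congr_v s_g n n (add_zero n)
    rw [Cochain.comp_zero_cochain_v, Cochain.ofHom_v, Cochain.ofHom_v] at s_g_v
    exact s_g_v
  id := by
    have id := congrArg totalCochain (retractionCochain_comp_add_comp_sectionCochain σ)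
    rw [totalCochain_add, totalCochain_comp, totalCochain_comp, totalCochain_ofHom,
      totalCochain_ofHom, totalCochain_ofHom_id] at id
    have id_v := Cochain.congr_v id n n (add_zero n)
    rw [Cochain.add_v, Cochain.comp_zero_cochain_v, Cochain.comp_zero_cochain_v, Cochain.ofHom_v,
      Cochain.ofHom_v, Cochain.ofHom_v] at id_v
    exact id_v

lemma sectionCochain_totalSplitting :
    sectionCochain (totalSplitting σ) = totalCochain (sectionCochain σ) := by
  ext n : 1
  exact sectionCochain_v _ n

lemma retractionCochain_totalSplitting :
    retractionCochain (totalSplitting σ) = totalCochain (retractionCochain σ) := by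
  ext n : 1
  exact retractionCochain_v _ n

lemma totalCochain_cocycleOfDegreewiseSplit :
    totalCochain (cocycleOfDegreewiseSplit S σ).1 =
      (cocycleOfDegreewiseSplit (S.map (totalFunctor C (up ℤ) (up ℤ) (up ℤ)))
        (totalSplitting σ)).1 := by
  rw [cocycleOfDegreewiseSplit_eq_δ_comp, cocycleOfDegreewiseSplit_eq_δ_comp,
    sectionCochain_totalSplitting, retractionCochain_totalSplitting, totalCochain_comp,
    ← δ_totalCochain]
  rfl

lemma map_homOfDegreewiseSplit_comp_totalShift₁Iso_hom :
    (totalFunctor C (up ℤ) (up ℤ) (up ℤ)).map (homOfDegreewiseSplit S σ) ≫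
        (totalShift₁Iso S.X₁ 1).hom =
      homOfDegreewiseSplit (S.map (totalFunctor C (up ℤ) (up ℤ) (up ℤ))) (totalSplitting σ) := by
  refine HomologicalComplex.hom_ext _ _ fun n =>
    total.hom_ext (K := S.X₃) (up ℤ) fun p q h => ?_
  dsimp at h
  refine (ιTotal_map_assoc _ _ (homOfDegreewiseSplit S σ) (up ℤ) p q n h
    ((totalShift₁Iso S.X₁ 1).hom.f n)).trans ?_
  refine (cancel_mono (shiftFunctorObjXIso (total S.X₁ (up ℤ)) 1 n (n + 1) rfl).hom).1 ?_
  simp only [Category.assoc]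
  refine (congrArg (((homOfDegreewiseSplit S σ).f p).f q ≫ ·)
    (ι_totalShift₁Iso_hom_f_comp S.X₁ 1 p q n (p + 1) (n + 1) h rfl rfl)).trans ?_
  refine Eq.trans ?_ (Category.assoc (ιTotal S.X₃ (up ℤ) p q n h) _ _).symm
  refine Eq.trans ?_ (congrArg (ιTotal S.X₃ (up ℤ) p q n h ≫ ·)
    (homOfDegreewiseSplit_f_comp (totalSplitting σ) n)).symm
  rw [← totalCochain_cocycleOfDegreewiseSplit]
  refine Eq.trans ?_ (ι_totalCochain_v _ p q n (p + 1) (n + 1) h rfl rfl).symm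
  rw [← homOfDegreewiseSplit_f_comp, HomologicalComplex.comp_f]
  exact (Category.assoc _ _ _).symm

/-- Totalization maps the triangle of a degreewise split short complex to that of its
totalization. -/
noncomputable def totalTriangleOfDegreewiseSplitIso :
    (totalFunctor C (up ℤ) (up ℤ) (up ℤ)).mapTriangle.obj (triangleOfDegreewiseSplit S σ) ≅
      triangleOfDegreewiseSplit
        (S.map (totalFunctor C (up ℤ) (up ℤ) (up ℤ))) (totalSplitting σ) :=
  Triangle.isoMk _ _ (Iso.refl _) (Iso.refl _) (Iso.refl _)
    ((Category.comp_id _).trans (Category.id_comp _).symm)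
    ((Category.comp_id _).trans (Category.id_comp _).symm)
    ((congrArg _ (CategoryTheory.Functor.map_id _ _)).trans <| (Category.comp_id _).trans <|
      (map_homOfDegreewiseSplit_comp_totalShift₁Iso_hom σ).trans (Category.id_comp _).symm)

end Triangle

section HomotopyCategory

instance {ι : Type*} (c : ComplexShape ι) [HasBinaryBiproducts C] :
    HasBinaryBiproducts (HomologicalComplex C c) where
  has_binary_biproduct _ _ := inferInstance

variable (C) [∀ K : HomologicalComplex₂ C (up ℤ) (up ℤ), K.HasTotal (up ℤ)]

/-- The functor `K(C(C)) ⥤ K(C)` induced by totalization. -/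
noncomputable def totalHomotopyFunctor :
    HomotopyCategory (CochainComplex C ℤ) (up ℤ) ⥤ HomotopyCategory C (up ℤ) :=
  CategoryTheory.Quotient.lift _
    (totalFunctor C (up ℤ) (up ℤ) (up ℤ) ⋙ HomotopyCategory.quotient C (up ℤ))
    fun _ _ _ _ ⟨H⟩ => HomotopyCategory.eq_of_homotopy _ _ (totalMapHomotopy H)

/-- The functor `totalHomotopyFunctor C` is induced by totalization. -/
noncomputable def totalHomotopyFunctorFactors :
    HomotopyCategory.quotient (CochainComplex C ℤ) (up ℤ) ⋙ totalHomotopyFunctor C ≅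
      totalFunctor C (up ℤ) (up ℤ) (up ℤ) ⋙ HomotopyCategory.quotient C (up ℤ) :=
  CategoryTheory.Quotient.lift.isLift _ _ _

noncomputable instance : (totalHomotopyFunctor C).CommShift ℤ :=
  Quotient.liftCommShift _ _ _ _

instance : NatTrans.CommShift (totalHomotopyFunctorFactors C).hom ℤ :=
  Quotient.liftCommShift_compatibility _ _ _ _

instance [HasZeroObject C] [HasBinaryBiproducts C] : (totalHomotopyFunctor C).IsTriangulated where
  map_distinguished T hT := by
    obtain ⟨S, σ, ⟨e⟩⟩ := (HomotopyCategory.distinguished_iff_iso_trianglehOfDegreewiseSplit T).1 hT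
    let commutes := (Functor.mapTriangleCompIso _ _).symm ≪≫
      Functor.mapTriangleIso (totalHomotopyFunctorFactors C) ≪≫ Functor.mapTriangleCompIso _ _
    exact (HomotopyCategory.distinguished_iff_iso_trianglehOfDegreewiseSplit _).2
      ⟨S.map (totalFunctor C (up ℤ) (up ℤ) (up ℤ)), totalSplitting σ,
        ⟨(totalHomotopyFunctor C).mapTriangle.mapIso e ≪≫ commutes.app _ ≪≫
          (HomotopyCategory.quotient C (up ℤ)).mapTriangle.mapIso
            (totalTriangleOfDegreewiseSplitIso σ)⟩⟩

end HomotopyCategory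

end Totalization

/-- **Theorem 4.11(2), homotopy-category part (see also Proposition 4.6).**
Let `A` be an additive category, `B` an additive category with countable coproducts, and
`F : A ⥤ C(B)` an additive functor.  Then the extended functor `F^C : C(A) ⥤ C(B)`
descends to a functor `F^K : K(A) ⥤ K(B)` between the homotopy categories, with
`F^K ∘ Q_A = Q_B ∘ F^C`, and `F^K` is triangle-exact (triangulated). -/
theorem extC_descends_to_homotopy_categories
    (F : A ⥤ CochainComplex B ℤ) [F.Additive] :
    ∃ FK : HomotopyCategory A (ComplexShape.up ℤ) ⥤ HomotopyCategory B (ComplexShape.up ℤ),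
      (HomotopyCategory.quotient A (ComplexShape.up ℤ) ⋙ FK) =
          (extC F ⋙ HomotopyCategory.quotient B (ComplexShape.up ℤ)) ∧
      ∃ _ : FK.CommShift ℤ, FK.IsTriangulated :=
  ⟨F.mapHomotopyCategory (ComplexShape.up ℤ) ⋙ totalHomotopyFunctor B, rfl,
    inferInstance, inferInstance⟩

end ExtensionOfFunctors
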